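/- arXiv:1904.04277 — 4 statements merged into one kernel-verified Lean document; each statement's English description precedes it below -/
import Mathlib

section
/- Let p be a positive integer and let f₁, f₂, g₁, g₂ be p×2p complex matrices, each of rank p, such that f₁g₁* = 0 and f₂g₂* = 0. Then det(f₁f₂*) ≠ 0 if and only if det(g₁g₂*) ≠ 0. -/
open Matrix

section

open scoped ComplexOrder

variable {𝕜 k m n : Type*} [RCLike 𝕜] [Fintype n]

/-- If `f * gᴴ = 0` and the ranks of `f` and `g` are complementary, then the kernel of `f` is the
range of `gᴴ`. -/
lemma ker_mulVecLin_eq_range_conjTranspose [Fintype k]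
    {f : Matrix m n 𝕜} {g : Matrix k n 𝕜} (h : f * gᴴ = 0) (hrank : f.rank + g.rank = Fintype.card n) :
    LinearMap.ker f.mulVecLin = LinearMap.range gᴴ.mulVecLin := by
  symm
  apply Submodule.eq_of_le_of_finrank_eq
  · rw [LinearMap.range_le_ker_iff, ← Matrix.mulVecLin_mul, h, Matrix.mulVecLin_zero]
  · have hker := f.mulVecLin.finrank_range_add_finrank_ker
    have hg := g.rank_conjTranspose
    rw [Module.finrank_fintype_fun_eq_card] at hker
    unfold Matrix.rank at hrank hg
    omega

/-- The conjugate transpose of a matrix of full row rank is injective on vectors. -/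
lemma mulVec_conjTranspose_injective_of_rank_eq_card [Fintype m] {f : Matrix m n 𝕜}
    (hf : f.rank = Fintype.card m) : Function.Injective fᴴ.mulVec := by
  have hker := fᴴ.mulVecLin.finrank_range_add_finrank_ker
  have hr := f.rank_conjTranspose
  rw [Module.finrank_fintype_fun_eq_card] at hker
  unfold Matrix.rank at hf hr
  have hbot : LinearMap.ker fᴴ.mulVecLin = ⊥ := Submodule.finrank_eq_zero.mp (by omega)
  exact LinearMap.ker_eq_bot.mp hbot

/-- Singularity of `f₁ * f₂ᴴ` passes to the matrices `g₁`, `g₂` of orthogonal rows. -/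
lemma det_mul_conjTranspose_eq_zero_of_orthogonal [Fintype k] [Fintype m] [DecidableEq k]
    [DecidableEq m] {f₁ f₂ : Matrix m n 𝕜} {g₁ g₂ : Matrix k n 𝕜}
    (hrank : f₁.rank + g₁.rank = Fintype.card n) (hf₂ : f₂.rank = Fintype.card m)
    (h₁ : f₁ * g₁ᴴ = 0) (h₂ : f₂ * g₂ᴴ = 0) (hdet : (f₁ * f₂ᴴ).det = 0) :
    (g₁ * g₂ᴴ).det = 0 := by
  obtain ⟨v, hv, hfv⟩ := Matrix.exists_mulVec_eq_zero_iff.mpr hdet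
  rw [← Matrix.mulVec_mulVec] at hfv
  have hmem : f₂ᴴ *ᵥ v ∈ LinearMap.ker f₁.mulVecLin := hfv
  rw [ker_mulVecLin_eq_range_conjTranspose h₁ hrank] at hmem
  obtain ⟨w, hw⟩ := hmem
  rw [Matrix.mulVecLin_apply] at hw
  have hgf : g₂ * f₂ᴴ = 0 := by simpa using congrArg Matrix.conjTranspose h₂
  have hdet' : (g₂ * g₁ᴴ).det = 0 := by
    refine Matrix.exists_mulVec_eq_zero_iff.mp ⟨w, ?_, ?_⟩
    · rintro rfl
      refine hv (mulVec_conjTranspose_injective_of_rank_eq_card hf₂ ?_)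
      rw [← hw, Matrix.mulVec_zero, Matrix.mulVec_zero]
    · rw [← Matrix.mulVec_mulVec, hw, Matrix.mulVec_mulVec, hgf, Matrix.zero_mulVec]
  simpa [hdet'] using Matrix.det_conjTranspose (g₂ * g₁ᴴ)

end

/-- Let `p` be a positive integer and `f₁, f₂, g₁, g₂` be `p × 2p` complex
matrices, each of rank `p`, such that `f₁ * g₁ᴴ = 0` and `f₂ * g₂ᴴ = 0`. Then
`det (f₁ * f₂ᴴ) ≠ 0` if and only if `det (g₁ * g₂ᴴ) ≠ 0`. -/
theorem stmt_0 (p : ℕ) (hp : 0 < p)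
    (f₁ f₂ g₁ g₂ : Matrix (Fin p) (Fin (2 * p)) ℂ)
    (hf₁ : f₁.rank = p) (hf₂ : f₂.rank = p) (hg₁ : g₁.rank = p) (hg₂ : g₂.rank = p)
    (h₁ : f₁ * g₁ᴴ = 0) (h₂ : f₂ * g₂ᴴ = 0) :
    (f₁ * f₂ᴴ).det ≠ 0 ↔ (g₁ * g₂ᴴ).det ≠ 0 := by
  have h₁' : g₁ * f₁ᴴ = 0 := by simpa using congrArg Matrix.conjTranspose h₁
  have h₂' : g₂ * f₂ᴴ = 0 := by simpa using congrArg Matrix.conjTranspose h₂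
  refine not_congr ⟨det_mul_conjTranspose_eq_zero_of_orthogonal ?_ ?_ h₁ h₂,
    det_mul_conjTranspose_eq_zero_of_orthogonal ?_ ?_ h₁' h₂'⟩ <;>
  simp only [Fintype.card_fin] <;> omega
end

section
/- Under the block Toeplitz setup, the identity A·S − S·A* = i(Φ₁Φ₂* + Φ₂Φ₁*) holds; moreover, S is the unique pn×pn complex matrix X satisfying A·X − X·A* = i(Φ₁Φ₂* + Φ₂Φ₁*). -/
open Matrix

/-- The `pn × pn` block Toeplitz matrix whose `(i,j)` block is `s (j - i)`. -/
noncomputable def toeplitzS (p n : ℕ) (s : ℤ → Matrix (Fin p) (Fin p) ℂ) :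
    Matrix (Fin n × Fin p) (Fin n × Fin p) ℂ :=
  Matrix.of fun x y => s ((y.1 : ℤ) - (x.1 : ℤ)) x.2 y.2

/-- The `pn × pn` block lower triangular matrix `A` whose `(i,j)` block is `0` for `j > i`,
`(i/2) I_p` for `j = i` and `i I_p` for `j < i`. -/
noncomputable def toeplitzA (p n : ℕ) : Matrix (Fin n × Fin p) (Fin n × Fin p) ℂ :=
  Matrix.of fun x y =>
    (if (y.1 : ℕ) < (x.1 : ℕ) then Complex.I else if x.1 = y.1 then Complex.I / 2 else 0) *
      (if x.2 = y.2 then 1 else 0)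

/-- The `pn × p` block column all of whose `n` blocks equal `I_p`. -/
noncomputable def toeplitzPhi2 (p n : ℕ) : Matrix (Fin n × Fin p) (Fin p) ℂ :=
  Matrix.of fun x b => if x.2 = b then 1 else 0

/-- The `pn × p` block column whose `k`-th block (`1 ≤ k ≤ n`) is
`s₀/2 + s₋₁ + ⋯ + s_{1-k} + i ν`. -/
noncomputable def toeplitzPhi1 (p n : ℕ) (s : ℤ → Matrix (Fin p) (Fin p) ℂ)
    (ν : Matrix (Fin p) (Fin p) ℂ) : Matrix (Fin n × Fin p) (Fin p) ℂ :=
  Matrix.of fun x b =>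
    ((2 : ℂ)⁻¹ • s 0 + (∑ j ∈ Finset.Icc 1 (x.1 : ℕ), s (-(j : ℤ))) + Complex.I • ν) x.2 b

/-- Entrywise form of the operator `X ↦ A X - X Aᴴ`. -/
theorem toeplitzA_commutator_apply (p n : ℕ) (X : Matrix (Fin n × Fin p) (Fin n × Fin p) ℂ)
    (i j : Fin n) (a b : Fin p) :
    (toeplitzA p n * X - X * (toeplitzA p n)ᴴ) (i, a) (j, b) =
      Complex.I * (X (i, a) (j, b) + (∑ k : Fin n, if (k : ℕ) < i then X (k, a) (j, b) else 0) +
        ∑ k : Fin n, if (k : ℕ) < j then X (i, a) (k, b) else 0) := by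
  have split (l : Fin n) (c : ℂ) (g : Fin n → ℂ) :
      ∑ k : Fin n, (if (k : ℕ) < l then c else if l = k then c / 2 else 0) * g k =
        c * (g l / 2 + ∑ k : Fin n, if (k : ℕ) < l then g k else 0) := by
    have term (k : Fin n) : (if (k : ℕ) < l then c else if l = k then c / 2 else 0) * g k =
        (if l = k then c * (g k / 2) else 0) + c * (if (k : ℕ) < l then g k else 0) := by
      by_cases h : l = k
      · subst h
        simp
        ring
      · simp [h]
    rw [Finset.sum_congr rfl fun k _ => term k, Finset.sum_add_distrib, ← Finset.mul_sum]
    simp [mul_add]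
  have left : (toeplitzA p n * X) (i, a) (j, b) =
      Complex.I * (X (i, a) (j, b) / 2 +
        ∑ k : Fin n, if (k : ℕ) < i then X (k, a) (j, b) else 0) := by
    rw [← split i Complex.I fun k => X (k, a) (j, b)]
    simp [Matrix.mul_apply, toeplitzA, Fintype.sum_prod_type]
  have right : (X * (toeplitzA p n)ᴴ) (i, a) (j, b) =
      -Complex.I * (X (i, a) (j, b) / 2 +
        ∑ k : Fin n, if (k : ℕ) < j then X (i, a) (k, b) else 0) := by
    rw [← split j (-Complex.I) fun k => X (i, a) (k, b)]
    simp only [Matrix.mul_apply, toeplitzA, Fintype.sum_prod_type, Matrix.conjTranspose_apply,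
      Matrix.of_apply]
    refine Finset.sum_congr rfl fun k _ => ?_
    rw [Finset.sum_eq_single b (fun c _ hc => by simp [Ne.symm hc]) (by simp)]
    simp only [if_true, mul_one]
    split_ifs <;> simp <;> ring
  rw [Matrix.sub_apply, left, right]
  ring

/-- The operator `X ↦ A X - X Aᴴ` has trivial kernel. -/
theorem eq_zero_of_toeplitzA_commutator_eq_zero (p n : ℕ)
    (X : Matrix (Fin n × Fin p) (Fin n × Fin p) ℂ)
    (hX : toeplitzA p n * X - X * (toeplitzA p n)ᴴ = 0) : X = 0 := by
  have vanish (m : ℕ) : ∀ (i j : Fin n) (a b : Fin p), (i : ℕ) + j = m →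
      X (i, a) (j, b) = 0 := by
    induction m using Nat.strong_induction_on with
    | _ m ih =>
      intro i j a b hm
      have h := toeplitzA_commutator_apply p n X i j a b
      rw [hX, Finset.sum_eq_zero (s := Finset.univ)
          (f := fun k : Fin n => if (k : ℕ) < i then X (k, a) (j, b) else 0),
        Finset.sum_eq_zero (s := Finset.univ)
          (f := fun k : Fin n => if (k : ℕ) < j then X (i, a) (k, b) else 0)] at h
      · simpa using h.symm
      · intro k _
        split_ifs with hk
        · exact ih (i + k) (by omega) i k a b rfl
        · rfl
      · intro k _
        split_ifs with hk
        · exact ih (k + j) (by omega) k j a b rfl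
        · rfl
  ext ⟨i, a⟩ ⟨j, b⟩
  exact vanish _ i j a b rfl

/-- Both sides are the sum of `f` over the integer interval from `-i` to `j`. -/
theorem sum_hook_eq_sum_interval (f : ℤ → ℂ) (i j : ℕ) :
    f (j - i) + ∑ k ∈ Finset.range i, f (j - k) + ∑ k ∈ Finset.range j, f (k - i) =
      f 0 + ∑ k ∈ Finset.Icc 1 i, f (-k) + ∑ k ∈ Finset.Icc 1 j, f k := by
  induction i with
  | zero =>
    have h : f j + ∑ k ∈ Finset.range j, f k = f 0 + ∑ k ∈ Finset.Icc 1 j, f k := by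
      induction j with
      | zero => simp
      | succ j ih =>
        rw [Finset.sum_range_succ, Finset.sum_Icc_succ_top (by omega), ← add_assoc (f 0), ← ih]
        ring
    simpa using h
  | succ i ih =>
    have telescope := Finset.sum_range_sub (fun k : ℕ => f ((k : ℤ) - (i + 1))) j
    have shift (k : ℕ) : ((k + 1 : ℕ) : ℤ) - (i + 1) = k - i := by push_cast; ring
    simp only [shift, Finset.sum_sub_distrib, Nat.cast_zero, zero_sub] at telescope
    rw [Finset.sum_range_succ, Finset.sum_Icc_succ_top (by omega)]
    push_cast
    linear_combination ih - telescope

/-- A sum over the elements of `Fin n` below `i` is a sum over `Finset.range i`. -/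
theorem sum_fin_ite_lt (n : ℕ) (i : Fin n) (g : ℕ → ℂ) :
    (∑ k : Fin n, if (k : ℕ) < i then g k else 0) = ∑ k ∈ Finset.range i, g k := by
  rw [Fin.sum_univ_eq_sum_range (fun k => if k < (i : ℕ) then g k else 0), ← Finset.sum_filter]
  congr 1
  ext k
  simp only [Finset.mem_filter, Finset.mem_range]
  omega

/-- The block Toeplitz matrix satisfies the displacement identity. -/
theorem toeplitzS_displacement (p n : ℕ) (s : ℤ → Matrix (Fin p) (Fin p) ℂ)
    (hs : ∀ k : ℤ, k.natAbs < n → s (-k) = (s k)ᴴ)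
    (ν : Matrix (Fin p) (Fin p) ℂ) (hν : ν.IsHermitian) :
    toeplitzA p n * toeplitzS p n s - toeplitzS p n s * (toeplitzA p n)ᴴ =
      Complex.I • (toeplitzPhi1 p n s ν * (toeplitzPhi2 p n)ᴴ +
        toeplitzPhi2 p n * (toeplitzPhi1 p n s ν)ᴴ) := by
  ext ⟨i, a⟩ ⟨j, b⟩
  have star_s (k : ℤ) (hk : k.natAbs < n) : star (s (-k) b a) = s k a b := by
    rw [hs k hk, Matrix.conjTranspose_apply, star_star]
  have left : (toeplitzPhi1 p n s ν * (toeplitzPhi2 p n)ᴴ) (i, a) (j, b) =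
      2⁻¹ * s 0 a b + ∑ k ∈ Finset.Icc 1 (i : ℕ), s (-k) a b + Complex.I * ν a b := by
    simp [Matrix.mul_apply, toeplitzPhi1, toeplitzPhi2, Matrix.sum_apply, apply_ite]
  have right : (toeplitzPhi2 p n * (toeplitzPhi1 p n s ν)ᴴ) (i, a) (j, b) =
      2⁻¹ * s 0 a b + ∑ k ∈ Finset.Icc 1 (j : ℕ), s k a b - Complex.I * ν a b := by
    have star_zero : star (s 0 b a) = s 0 a b := by
      simpa using star_s 0 (by simpa using i.pos)
    have star_sum : star (∑ k ∈ Finset.Icc 1 (j : ℕ), s (-k) b a) =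
        ∑ k ∈ Finset.Icc 1 (j : ℕ), s k a b := by
      rw [star_sum]
      refine Finset.sum_congr rfl fun k hk => star_s k ?_
      have := (Finset.mem_Icc.mp hk).2
      omega
    have entry : (toeplitzPhi2 p n * (toeplitzPhi1 p n s ν)ᴴ) (i, a) (j, b) =
        star (2⁻¹ * s 0 b a + ∑ k ∈ Finset.Icc 1 (j : ℕ), s (-k) b a + Complex.I * ν b a) := by
      simp [Matrix.mul_apply, toeplitzPhi1, toeplitzPhi2, Matrix.sum_apply]
    rw [entry, star_add, star_add, star_sum, star_mul', star_mul', star_zero, hν.apply a b]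
    simp [sub_eq_add_neg]
  rw [toeplitzA_commutator_apply, Matrix.smul_apply, Matrix.add_apply, left, right]
  simp only [toeplitzS, Matrix.of_apply, smul_eq_mul]
  rw [sum_fin_ite_lt n i fun k => s ((j : ℤ) - k) a b,
    sum_fin_ite_lt n j fun k => s ((k : ℤ) - i) a b,
    sum_hook_eq_sum_interval (fun k => s k a b)]
  ring

/-- Under the block Toeplitz setup, the identity
`A S - S Aᴴ = i (Φ₁ Φ₂ᴴ + Φ₂ Φ₁ᴴ)` holds; moreover `S` is the unique `pn × pn` complex matrix
`X` satisfying `A X - X Aᴴ = i (Φ₁ Φ₂ᴴ + Φ₂ Φ₁ᴴ)`. -/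
theorem stmt_1 (p n : ℕ) (hp : 0 < p) (hn : 0 < n)
    (s : ℤ → Matrix (Fin p) (Fin p) ℂ)
    (hs : ∀ k : ℤ, k.natAbs < n → s (-k) = (s k)ᴴ)
    (ν : Matrix (Fin p) (Fin p) ℂ) (hν : ν.IsHermitian) :
    (toeplitzA p n * toeplitzS p n s - toeplitzS p n s * (toeplitzA p n)ᴴ =
        Complex.I • (toeplitzPhi1 p n s ν * (toeplitzPhi2 p n)ᴴ +
          toeplitzPhi2 p n * (toeplitzPhi1 p n s ν)ᴴ)) ∧
      ∀ X : Matrix (Fin n × Fin p) (Fin n × Fin p) ℂ,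
        toeplitzA p n * X - X * (toeplitzA p n)ᴴ =
          Complex.I • (toeplitzPhi1 p n s ν * (toeplitzPhi2 p n)ᴴ +
            toeplitzPhi2 p n * (toeplitzPhi1 p n s ν)ᴴ) →
        X = toeplitzS p n s := by
  have identity := toeplitzS_displacement p n s hs ν hν
  refine ⟨identity, fun X hX => sub_eq_zero.mp ?_⟩
  apply eq_zero_of_toeplitzA_commutator_eq_zero
  rw [Matrix.mul_sub, Matrix.sub_mul, sub_sub_sub_comm, hX, identity, sub_self]
end

section
/- Under the operator-identity setup, assume additionally that A has no real eigenvalues, and let ψ be a p×p complex matrix such that i·(ψ* − ψ) is positive definite. Define A_ψ = A − Φ₂·(i·Φ₁* − ψ*·Φ₂*)·S⁻¹. Then A_ψ·S − S·A_ψ* = Φ₂·(ψ* − ψ)·Φ₂*, and A_ψ has no real eigenvalues. -/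
open Matrix ComplexOrder

/-- A square complex matrix without real eigenvalues has an adjoint without real eigenvalues. -/
theorem eq_zero_of_conjTranspose_mulVec_eq_real_smul {n : Type*} [Fintype n] [DecidableEq n]
    {A : Matrix n n ℂ} {c : ℝ} (hA : ∀ v : n → ℂ, A *ᵥ v = (c : ℂ) • v → v = 0)
    {w : n → ℂ} (hw : Aᴴ *ᵥ w = (c : ℂ) • w) : w = 0 := by
  have hunit : IsUnit (A - (c : ℂ) • (1 : Matrix n n ℂ)) := by
    rw [← Matrix.mulVec_injective_iff_isUnit]
    refine (injective_iff_map_eq_zero (A - (c : ℂ) • (1 : Matrix n n ℂ)).mulVecLin).2 fun v hv => ?_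
    refine hA v ?_
    simpa [Matrix.sub_mulVec, Matrix.smul_mulVec, sub_eq_zero] using hv
  have hadj : IsUnit (A - (c : ℂ) • (1 : Matrix n n ℂ))ᴴ := hunit.star
  refine Matrix.mulVec_injective_iff_isUnit.2 hadj ?_
  simp [Matrix.sub_mulVec, Matrix.smul_mulVec, hw]

/-- If `T w = c S w` with `c` real and `S` Hermitian, then `T - Tᴴ` has vanishing quadratic form
at `w`. -/
theorem star_dotProduct_sub_conjTranspose_mulVec_eq_zero {n : Type*} [Fintype n]
    {S T : Matrix n n ℂ} (hS : S.IsHermitian) {c : ℝ} {w : n → ℂ}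
    (hw : T *ᵥ w = (c : ℂ) • S *ᵥ w) : star w ⬝ᵥ ((T - Tᴴ) *ᵥ w) = 0 := by
  have hadj : star w ⬝ᵥ (Tᴴ *ᵥ w) = (c : ℂ) * (star w ⬝ᵥ (S *ᵥ w)) := by
    rw [Matrix.dotProduct_mulVec, ← Matrix.star_mulVec, hw, star_smul, smul_dotProduct,
      Matrix.star_mulVec, hS.eq, ← Matrix.dotProduct_mulVec]
    simp
  rw [Matrix.sub_mulVec, dotProduct_sub, hadj, hw, dotProduct_smul, smul_eq_mul, sub_self]

/-- If `i D` is positive definite, the quadratic form of `Φ D Φᴴ` vanishes only on the kernel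
of `Φᴴ`. -/
theorem conjTranspose_mulVec_eq_zero_of_posDef {m n : Type*} [Fintype m] [Fintype n]
    {D : Matrix m m ℂ} (hD : (Complex.I • D).PosDef) {Φ : Matrix n m ℂ} {w : n → ℂ}
    (hw : star w ⬝ᵥ ((Φ * D * Φᴴ) *ᵥ w) = 0) : Φᴴ *ᵥ w = 0 := by
  by_contra hne
  refine (hD.dotProduct_mulVec_pos hne).ne' ?_
  rw [Matrix.star_mulVec, Matrix.conjTranspose_conjTranspose, Matrix.smul_mulVec,
    dotProduct_smul, ← Matrix.dotProduct_mulVec, Matrix.mulVec_mulVec, Matrix.mulVec_mulVec,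
    hw, smul_zero]

/-- Under the operator-identity setup, if `A` has no real eigenvalues and
`ψ` is a `p × p` matrix with `i (ψᴴ - ψ)` positive definite, then
`A_ψ = A - Φ₂ (i Φ₁ᴴ - ψᴴ Φ₂ᴴ) S⁻¹` satisfies `A_ψ S - S A_ψᴴ = Φ₂ (ψᴴ - ψ) Φ₂ᴴ` and
`A_ψ` has no real eigenvalues. -/
theorem stmt_4 (p N : ℕ) (hp : 0 < p) (hN : 0 < N)
    (A S : Matrix (Fin N) (Fin N) ℂ) (Φ₁ Φ₂ : Matrix (Fin N) (Fin p) ℂ)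
    (hS : S.IsHermitian) (hSinv : IsUnit S)
    (hid : A * S - S * Aᴴ = Complex.I • (Φ₁ * Φ₂ᴴ + Φ₂ * Φ₁ᴴ))
    (hA : ∀ (c : ℝ) (v : Fin N → ℂ), A.mulVec v = (c : ℂ) • v → v = 0)
    (ψ : Matrix (Fin p) (Fin p) ℂ)
    (hψ : (Complex.I • (ψᴴ - ψ)).PosDef) :
    ((A - Φ₂ * (Complex.I • Φ₁ᴴ - ψᴴ * Φ₂ᴴ) * S⁻¹) * S -
        S * (A - Φ₂ * (Complex.I • Φ₁ᴴ - ψᴴ * Φ₂ᴴ) * S⁻¹)ᴴ =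
      Φ₂ * (ψᴴ - ψ) * Φ₂ᴴ) ∧
    ∀ (c : ℝ) (v : Fin N → ℂ),
      (A - Φ₂ * (Complex.I • Φ₁ᴴ - ψᴴ * Φ₂ᴴ) * S⁻¹).mulVec v = (c : ℂ) • v → v = 0 := by
  have hdet : IsUnit S.det := (Matrix.isUnit_iff_isUnit_det S).1 hSinv
  set B := A - Φ₂ * (Complex.I • Φ₁ᴴ - ψᴴ * Φ₂ᴴ) * S⁻¹ with hB
  have hBS : B * S = A * S - Φ₂ * (Complex.I • Φ₁ᴴ - ψᴴ * Φ₂ᴴ) := by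
    rw [hB, Matrix.sub_mul, Matrix.nonsing_inv_mul_cancel_right _ _ hdet]
  have hSB : S * Bᴴ = (B * S)ᴴ := by rw [Matrix.conjTranspose_mul, hS.eq]
  have hAS : A * S = S * Aᴴ + Complex.I • (Φ₁ * Φ₂ᴴ + Φ₂ * Φ₁ᴴ) := by
    rw [← hid]; abel
  have hidB : B * S - S * Bᴴ = Φ₂ * (ψᴴ - ψ) * Φ₂ᴴ := by
    have hadj : (B * S)ᴴ = S * Aᴴ + Complex.I • (Φ₁ * Φ₂ᴴ) + Φ₂ * ψ * Φ₂ᴴ := by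
      rw [hBS]
      simp [Matrix.conjTranspose_mul, hS.eq, Matrix.sub_mul, Matrix.mul_assoc]
      abel
    rw [hSB, hadj, hBS, hAS]
    simp only [Matrix.mul_sub, Matrix.sub_mul, Matrix.mul_smul, smul_add, Matrix.mul_assoc]
    abel
  refine ⟨hidB, fun c v hv => ?_⟩
  obtain ⟨w, rfl⟩ : ∃ w, v = S *ᵥ w :=
    ⟨S⁻¹ *ᵥ v, by rw [Matrix.mulVec_mulVec, Matrix.mul_nonsing_inv _ hdet, Matrix.one_mulVec]⟩
  rw [Matrix.mulVec_mulVec] at hv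
  have hker : Φ₂ᴴ *ᵥ w = 0 := by
    refine conjTranspose_mulVec_eq_zero_of_posDef hψ ?_
    rw [← hidB, hSB]
    exact star_dotProduct_sub_conjTranspose_mulVec_eq_zero hS hv
  have hAw : S *ᵥ (Aᴴ *ᵥ w) = S *ᵥ ((c : ℂ) • w) := by
    have hSA : S * Aᴴ = B * S - (Complex.I • Φ₁ + Φ₂ * ψᴴ) * Φ₂ᴴ := by
      rw [hBS, hAS]
      simp only [Matrix.mul_sub, Matrix.add_mul, Matrix.mul_smul, Matrix.smul_mul, smul_add,
        Matrix.mul_assoc]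
      abel
    rw [Matrix.mulVec_mulVec, hSA, Matrix.sub_mulVec, hv, ← Matrix.mulVec_mulVec, hker,
      Matrix.mulVec_zero, sub_zero, Matrix.mulVec_smul]
  have hw : w = 0 := eq_zero_of_conjTranspose_mulVec_eq_real_smul (hA c)
    (Matrix.mulVec_injective_iff_isUnit.2 hSinv hAw)
  rw [hw, Matrix.mulVec_zero]
end

section
/- Let p, N be positive integers, let A be an N×N complex matrix, S an invertible N×N complex matrix, Φ₁, Φ₂ N×p complex matrices, and ψ₀ a p×p complex matrix. Define A_ψ = A − Φ₂·(i·Φ₁* − ψ₀*·Φ₂*)·S⁻¹ and, for z ∈ ℂ such that both A − z·I and A_ψ − z·I are invertible, define G(z) = I_p − (i·Φ₁* − ψ₀*·Φ₂*)·S⁻¹·(A − z·I)⁻¹·Φ₂. Then (A_ψ − z·I)⁻¹·Φ₂·G(z) = (A − z·I)⁻¹·Φ₂. -/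
open Matrix

/-- Push-through identity: `(B - U V)⁻¹ U (1 - V B⁻¹ U) = B⁻¹ U`. -/
theorem Matrix.inv_sub_mul_mul_one_sub {m n R : Type*} [Fintype m] [DecidableEq m]
    [Fintype n] [DecidableEq n] [CommRing R]
    {B : Matrix n n R} {U : Matrix n m R} {V : Matrix m n R}
    (hB : IsUnit B) (hBUV : IsUnit (B - U * V)) :
    (B - U * V)⁻¹ * U * (1 - V * B⁻¹ * U) = B⁻¹ * U := by
  rw [isUnit_iff_isUnit_det] at hB hBUV
  have hfactor : U * (1 - V * B⁻¹ * U) = (B - U * V) * (B⁻¹ * U) := by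
    rw [Matrix.sub_mul, mul_nonsing_inv_cancel_left _ _ hB, Matrix.mul_sub, Matrix.mul_one]
    simp only [Matrix.mul_assoc]
  rw [Matrix.mul_assoc, hfactor, nonsing_inv_mul_cancel_left _ _ hBUV]

/-- For `A_ψ = A - Φ₂ (i Φ₁ᴴ - ψ₀ᴴ Φ₂ᴴ) S⁻¹` and
`G(z) = I_p - (i Φ₁ᴴ - ψ₀ᴴ Φ₂ᴴ) S⁻¹ (A - z I)⁻¹ Φ₂`, whenever `A - z I` and `A_ψ - z I`
are invertible one has `(A_ψ - z I)⁻¹ Φ₂ G(z) = (A - z I)⁻¹ Φ₂`. -/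
theorem stmt_5 (p N : ℕ) (hp : 0 < p) (hN : 0 < N)
    (A S : Matrix (Fin N) (Fin N) ℂ) (hSinv : IsUnit S)
    (Φ₁ Φ₂ : Matrix (Fin N) (Fin p) ℂ)
    (ψ₀ : Matrix (Fin p) (Fin p) ℂ) (z : ℂ)
    (hA : IsUnit (A - z • (1 : Matrix (Fin N) (Fin N) ℂ)))
    (hAψ : IsUnit (A - Φ₂ * (Complex.I • Φ₁ᴴ - ψ₀ᴴ * Φ₂ᴴ) * S⁻¹ -
      z • (1 : Matrix (Fin N) (Fin N) ℂ))) :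
    (A - Φ₂ * (Complex.I • Φ₁ᴴ - ψ₀ᴴ * Φ₂ᴴ) * S⁻¹ - z • 1)⁻¹ * Φ₂ *
        (1 - (Complex.I • Φ₁ᴴ - ψ₀ᴴ * Φ₂ᴴ) * S⁻¹ * (A - z • 1)⁻¹ * Φ₂) =
      (A - z • 1)⁻¹ * Φ₂ := by
  rw [Matrix.mul_assoc Φ₂, sub_right_comm] at hAψ ⊢
  exact Matrix.inv_sub_mul_mul_one_sub hA hAψ
end
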